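/- arXiv:1907.13438 — 3 statements merged into one kernel-verified Lean document; each statement's English description precedes it below -/
import Mathlib

section
/- Let A = D + N ∈ Mₙ(ℍ), where D = diag(d₁,…,dₙ) with d₁,…,dₙ ∈ ℝ and N = [a_{ij}] is strictly upper triangular (a_{ij} = 0 for i ≥ j) and a tree matrix. Set d̲ = min{d₁,…,dₙ}, d̄ = max{d₁,…,dₙ}, and for d ∈ [d̲, d̄] let r(d) = max{∑_{i≠j} βᵢβⱼ|a_{ij}| : β ∈ S⁺_{ℝⁿ}, ∑ᵢ dᵢβᵢ² = d}. Then W(A) = ⋃_{d ∈ [d̲, d̄]} 𝔻_ℍ(d, r(d)). -/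
/-- The quaternionic numerical range of a square quaternionic matrix. -/
def qnr {ι : Type*} [Fintype ι] (A : Matrix ι ι (Quaternion ℝ)) : Set (Quaternion ℝ) :=
  {q | ∃ x : ι → Quaternion ℝ, (∑ i, ‖x i‖ ^ 2) = 1 ∧
    q = ∑ i, ∑ j, star (x i) * A i j * x j}

/-- The undirected graph associated with a quaternionic matrix `A`: distinct vertices `i, j`
are adjacent iff `A i j ≠ 0` or `A j i ≠ 0`. -/
def graphOf {n : ℕ} (A : Matrix (Fin n) (Fin n) (Quaternion ℝ)) : SimpleGraph (Fin n) :=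
  SimpleGraph.fromRel (fun i j => A i j ≠ 0)

/-!
Since `ℍ` is not commutative, the phases of the entries of `N` are handled as a gain graph. On a
forest any two gain functions are related by switching, so a diagonal unitary conjugation turns
every nonzero entry `aᵢⱼ` into `|aᵢⱼ| u` for one common unit quaternion `u`. Hence, for each
`β ∈ S⁺`, the whole sphere of radius `f(β) = ∑_{i≠j} βᵢβⱼ|aᵢⱼ|` around `c(β) = ∑ dᵢβᵢ²` lies in
`W(A)`, while the triangle inequality puts `W(A)` in the union of the closed balls with these
radii. The balls are filled by the spheres: `S⁺` is connected and contains basis vectors, at which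
`f` vanishes, so for `q` in the ball of `β` the function `|q - c| - f` has a zero on `S⁺`.
-/

open scoped Quaternion

section GainGraph

variable {V Γ : Type*}

/-- The gain of a walk in a gain graph: the product of the gains `φ v w` of its successive steps,
taken in the order in which they are traversed. -/
def walkGain [Monoid Γ] {G : SimpleGraph V} (φ : V → V → Γ) {u v : V} (p : G.Walk u v) : Γ :=
  (p.darts.map fun e => φ e.fst e.snd).prod

theorem walkGain_concat [Monoid Γ] {G : SimpleGraph V} (φ : V → V → Γ) {u v w : V}
    (p : G.Walk u v) (h : G.Adj v w) : walkGain φ (p.concat h) = walkGain φ p * φ v w := by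
  simp [walkGain, SimpleGraph.Walk.darts_concat]

variable [Group Γ]

theorem walkGain_eq_mul_of_adj {G : SimpleGraph V} (hG : G.IsAcyclic) {φ : V → V → Γ}
    (hφ : ∀ v w, G.Adj v w → φ w v = (φ v w)⁻¹) {u u' v w : V} (hu : u = u')
    {p : G.Walk u v} {q : G.Walk u' w} (hp : p.IsPath) (hq : q.IsPath) (h : G.Adj v w) :
    walkGain φ q = walkGain φ p * φ v w := by
  subst hu
  by_cases hv : v ∈ q.support
  · rw [hG.path_concat hp hq h hv, walkGain_concat]
  · have hw := hG.mem_support_of_ne_mem_support_of_adj_of_isPath hp hq h hv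
    rw [hG.path_concat hq hp h.symm hw, walkGain_concat, hφ v w h, inv_mul_cancel_right]

theorem exists_potential_of_isAcyclic {G : SimpleGraph V} (hG : G.IsAcyclic) {φ : V → V → Γ}
    (hφ : ∀ v w, G.Adj v w → φ w v = (φ v w)⁻¹) :
    ∃ θ : V → Γ, ∀ v w, G.Adj v w → φ v w = (θ v)⁻¹ * θ w := by
  let root : V → V := fun v => (G.connectedComponentMk v).out
  have hroot (v : V) : G.Reachable (root v) v :=
    SimpleGraph.ConnectedComponent.exact (Quot.out_eq _)
  choose p hp using fun v => (hroot v).exists_isPath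
  refine ⟨fun v => walkGain φ (p v), fun v w h => ?_⟩
  have hvw : root v = root w :=
    congrArg Quot.out (SimpleGraph.ConnectedComponent.connectedComponentMk_eq_of_adj h)
  exact eq_inv_mul_of_mul_eq (walkGain_eq_mul_of_adj hG hφ hvw (hp v) (hp w) h).symm

theorem exists_potential_of_asymm {r : V → V → Prop} (hr : ∀ i j, r i j → ¬ r j i)
    (hforest : (SimpleGraph.fromRel r).IsAcyclic) (g : V → V → Γ) :
    ∃ θ : V → Γ, ∀ i j, r i j → g i j = (θ i)⁻¹ * θ j := by
  classical
  obtain ⟨θ, hθ⟩ := exists_potential_of_isAcyclic hforest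
    (φ := fun i j => if r i j then g i j else (g j i)⁻¹) (by
      rintro v w ⟨-, hvw | hwv⟩
      · simp only [hvw, hr v w hvw, if_true, if_false]
      · simp only [hwv, hr w v hwv, if_true, if_false, inv_inv])
  refine ⟨θ, fun i j hij => ?_⟩
  have hne : i ≠ j := by
    rintro rfl
    exact hr i i hij hij
  simpa only [hij, if_true] using hθ i j ⟨hne, Or.inl hij⟩

theorem exists_switching_of_asymm {r : V → V → Prop} (hr : ∀ i j, r i j → ¬ r j i)
    (hforest : (SimpleGraph.fromRel r).IsAcyclic) (g h : V → V → Γ) :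
    ∃ w : V → Γ, ∀ i j, r i j → (w i)⁻¹ * g i j * w j = h i j := by
  obtain ⟨θ, hθ⟩ := exists_potential_of_asymm hr hforest g
  obtain ⟨ψ, hψ⟩ := exists_potential_of_asymm hr hforest h
  refine ⟨fun i => (θ i)⁻¹ * ψ i, fun i j hij => ?_⟩
  rw [hθ i j hij, hψ i j hij]
  group

end GainGraph

section NonnegUnitSphere

/-- The set `S⁺` of nonnegative real vectors of Euclidean norm one, as plain functions. -/
def nonnegUnitSphere (ι : Type*) [Fintype ι] : Set (ι → ℝ) :=
  {β | (∀ i, 0 ≤ β i) ∧ ∑ i, β i ^ 2 = 1}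

variable {ι : Type*} [Fintype ι]

/-- The mean `∑ dᵢ βᵢ²` of `d` with weights `βᵢ²`: the centre of the ball attached to `β`. -/
def sqWeightedMean (d β : ι → ℝ) : ℝ :=
  ∑ i, d i * β i ^ 2

theorem nonnegUnitSphere_eq_image_stdSimplex :
    nonnegUnitSphere ι = (fun (x : ι → ℝ) i => √(x i)) '' stdSimplex ℝ ι := by
  ext β
  constructor
  · rintro ⟨hβ, hsum⟩
    exact ⟨fun i => β i ^ 2, ⟨fun i => sq_nonneg _, hsum⟩, funext fun i => Real.sqrt_sq (hβ i)⟩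
  · rintro ⟨x, ⟨hx, hsum⟩, rfl⟩
    exact ⟨fun i => Real.sqrt_nonneg _, by simpa only [Real.sq_sqrt (hx _)] using hsum⟩

theorem isPreconnected_nonnegUnitSphere : IsPreconnected (nonnegUnitSphere ι) := by
  rw [nonnegUnitSphere_eq_image_stdSimplex]
  exact (convex_stdSimplex ℝ ι).isPreconnected.image _ (by fun_prop)

theorem single_mem_nonnegUnitSphere [DecidableEq ι] (k : ι) :
    Pi.single k 1 ∈ nonnegUnitSphere ι :=
  ⟨fun i => by by_cases h : i = k <;> simp [h],
    by simp [Pi.single_apply]⟩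

theorem sqWeightedMean_mem_Icc {d β : ι → ℝ} {a b : ℝ} (hd : ∀ i, d i ∈ Set.Icc a b)
    (hβ : β ∈ nonnegUnitSphere ι) : sqWeightedMean d β ∈ Set.Icc a b := by
  simpa only [sqWeightedMean, smul_eq_mul, mul_comm] using
    (convex_Icc a b).sum_mem (fun i _ => sq_nonneg (β i)) hβ.2 fun i _ => hd i

end NonnegUnitSphere

section OffDiagForm

variable {ι R : Type*} [Fintype ι] [DecidableEq ι]

/-- The form `∑_{i ≠ j} βᵢ βⱼ ‖Nᵢⱼ‖`: the radius of the ball attached to `β`. -/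
def offDiagForm [Norm R] (N : Matrix ι ι R) (β : ι → ℝ) : ℝ :=
  ∑ i, ∑ j with j ≠ i, β i * β j * ‖N i j‖

theorem offDiagForm_single [Norm R] (N : Matrix ι ι R) (k : ι) :
    offDiagForm N (Pi.single k 1) = 0 := by
  refine Finset.sum_eq_zero fun i _ => Finset.sum_eq_zero fun j hj => ?_
  have hji : j ≠ i := (Finset.mem_filter.mp hj).2
  by_cases hi : i = k
  · simp [Pi.single_eq_of_ne (hi ▸ hji)]
  · simp [Pi.single_eq_of_ne hi]

theorem offDiagForm_eq_sum_of_diag_eq_zero [SeminormedAddCommGroup R] {N : Matrix ι ι R}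
    (hN : ∀ i, N i i = 0) (β : ι → ℝ) :
    offDiagForm N β = ∑ i, ∑ j, β i * β j * ‖N i j‖ := by
  refine Finset.sum_congr rfl fun i _ => Finset.sum_filter_of_ne fun j _ hj => ?_
  rintro rfl
  simp [hN] at hj

theorem exists_norm_sub_eq_offDiagForm [Norm R] (N : Matrix ι ι R) (d : ι → ℝ) {q : ℍ}
    {β : ι → ℝ} (hβ : β ∈ nonnegUnitSphere ι)
    (hq : ‖q - (sqWeightedMean d β : ℍ)‖ ≤ offDiagForm N β) :
    ∃ b ∈ nonnegUnitSphere ι, ‖q - (sqWeightedMean d b : ℍ)‖ = offDiagForm N b := by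
  obtain ⟨k⟩ : Nonempty ι := by
    by_contra hι
    rw [not_nonempty_iff] at hι
    simpa using hβ.2
  have hdist : Continuous fun b => ‖q - (sqWeightedMean d b : ℍ)‖ := by
    have hmean : Continuous (sqWeightedMean d) := by
      unfold sqWeightedMean
      fun_prop
    exact (continuous_const.sub (Quaternion.continuous_coe.comp hmean)).norm
  have hform : Continuous (offDiagForm N) := by
    unfold offDiagForm
    fun_prop
  exact isPreconnected_nonnegUnitSphere.intermediate_value₂ hβ (single_mem_nonnegUnitSphere k)
    hdist.continuousOn hform.continuousOn hq ((offDiagForm_single N k).trans_le (norm_nonneg _))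

end OffDiagForm

section StarForm

variable {ι : Type*} [Fintype ι]

/-- The value `x⋆ A x` at the vector `x` of the form with matrix `A`. -/
def starForm {R : Type*} [NonUnitalNonAssocSemiring R] [Star R] (A : Matrix ι ι R) (x : ι → R) :
    R :=
  ∑ i, ∑ j, star (x i) * A i j * x j

theorem norm_starForm_le_sum {R : Type*} [NonUnitalSeminormedRing R] [StarRing R]
    [NormedStarGroup R] (A : Matrix ι ι R) (x : ι → R) :
    ‖starForm A x‖ ≤ ∑ i, ∑ j, ‖x i‖ * ‖x j‖ * ‖A i j‖ := by
  refine norm_sum_le_of_le _ fun i _ => norm_sum_le_of_le _ fun j _ => ?_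
  calc ‖star (x i) * A i j * x j‖
      ≤ ‖star (x i)‖ * ‖A i j‖ * ‖x j‖ := norm_mul₃_le
    _ = ‖x i‖ * ‖x j‖ * ‖A i j‖ := by rw [norm_star]; ring

theorem starForm_diagonal_add [DecidableEq ι] (d : ι → ℝ) (N : Matrix ι ι ℍ) (x : ι → ℍ) :
    starForm (Matrix.diagonal (fun i => (d i : ℍ)) + N) x =
      (sqWeightedMean d fun i => ‖x i‖ : ℍ) + starForm N x := by
  have hdiag (i : ι) : ∑ j, star (x i) * Matrix.diagonal (fun i => (d i : ℍ)) i j * x j =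
      ((d i * ‖x i‖ ^ 2 : ℝ) : ℍ) := by
    rw [Finset.sum_eq_single_of_mem i (Finset.mem_univ i) fun j _ hj => by
      rw [Matrix.diagonal_apply_ne _ hj.symm, mul_zero, zero_mul]]
    rw [Matrix.diagonal_apply_eq, ← Quaternion.coe_commutes, mul_assoc, Quaternion.star_mul_self,
      Quaternion.normSq_eq_norm_mul_self, ← sq, Quaternion.coe_mul]
  have hmean : (sqWeightedMean d fun i => ‖x i‖ : ℍ) = ∑ i, ((d i * ‖x i‖ ^ 2 : ℝ) : ℍ) :=
    map_sum (algebraMap ℝ ℍ) _ _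
  simp only [starForm, Matrix.add_apply, mul_add, add_mul, Finset.sum_add_distrib, hdiag, hmean]

end StarForm

section NumericalRange

variable {ι : Type*}

theorem exists_unitary_eq_norm_smul (q : ℍ) : ∃ u : unitary ℍ, q = ‖q‖ • (u : ℍ) := by
  rcases eq_or_ne q 0 with rfl | hq
  · exact ⟨1, by simp⟩
  · have hq' : ‖q‖ ≠ 0 := norm_ne_zero_iff.mpr hq
    have hnorm : Quaternion.normSq (‖q‖⁻¹ • q) = 1 := by
      rw [Quaternion.normSq_eq_norm_mul_self, norm_smul, norm_inv, norm_norm,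
        inv_mul_cancel₀ hq', one_mul]
    refine ⟨⟨‖q‖⁻¹ • q, Unitary.mem_iff.mpr ⟨?_, ?_⟩⟩, (smul_inv_smul₀ hq' q).symm⟩
    · rw [Quaternion.star_mul_self, hnorm, Quaternion.coe_one]
    · rw [Quaternion.self_mul_star, hnorm, Quaternion.coe_one]

theorem exists_unitary_star_mul_mul_eq_norm_smul {N : Matrix ι ι ℍ}
    (hN : ∀ i j, N i j ≠ 0 → N j i = 0)
    (hforest : (SimpleGraph.fromRel fun i j => N i j ≠ 0).IsAcyclic) (u : unitary ℍ) :
    ∃ w : ι → unitary ℍ, ∀ i j, star (w i : ℍ) * N i j * w j = ‖N i j‖ • (u : ℍ) := by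
  choose phase hphase using fun i j => exists_unitary_eq_norm_smul (N i j)
  obtain ⟨w, hw⟩ := exists_switching_of_asymm (fun i j hij => not_not.mpr (hN i j hij)) hforest
    phase fun _ _ => u
  refine ⟨w, fun i j => ?_⟩
  rcases eq_or_ne (N i j) 0 with hij | hij
  · simp [hij]
  · have hunit : star (w i : ℍ) * phase i j * w j = u := by
      simp [← hw i j hij, ← Unitary.star_eq_inv]
    calc star (w i : ℍ) * N i j * w j
        = star (w i : ℍ) * (‖N i j‖ • (phase i j : ℍ)) * w j := by rw [← hphase]
      _ = ‖N i j‖ • (u : ℍ) := by rw [mul_smul_comm, smul_mul_assoc, hunit]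

variable [Fintype ι] [DecidableEq ι] {N : Matrix ι ι ℍ} {d : ι → ℝ} {q : ℍ}

theorem mem_qnr_of_norm_sub_eq_offDiagForm (hN : ∀ i j, N i j ≠ 0 → N j i = 0)
    (hforest : (SimpleGraph.fromRel fun i j => N i j ≠ 0).IsAcyclic) {β : ι → ℝ}
    (hβ : β ∈ nonnegUnitSphere ι)
    (hq : ‖q - (sqWeightedMean d β : ℍ)‖ = offDiagForm N β) :
    q ∈ qnr (Matrix.diagonal (fun i => (d i : ℍ)) + N) := by
  obtain ⟨u, hu⟩ := exists_unitary_eq_norm_smul (q - (sqWeightedMean d β : ℍ))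
  obtain ⟨w, hw⟩ := exists_unitary_star_mul_mul_eq_norm_smul hN hforest u
  have hnorm (i : ι) : ‖β i • (w i : ℍ)‖ = β i := by
    rw [norm_smul, CStarRing.norm_coe_unitary, mul_one, Real.norm_of_nonneg (hβ.1 i)]
  have hform : starForm N (fun i => β i • (w i : ℍ)) = offDiagForm N β • (u : ℍ) := by
    have hdiag (i : ι) : N i i = 0 := by_contra fun h => h (hN i i h)
    have hterm (i j : ι) : star (β i • (w i : ℍ)) * N i j * (β j • (w j : ℍ)) =
        (β i * β j * ‖N i j‖) • (u : ℍ) := by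
      rw [Quaternion.star_smul, smul_mul_assoc, smul_mul_assoc, mul_smul_comm, hw, smul_smul,
        smul_smul]
    simp only [starForm, offDiagForm_eq_sum_of_diag_eq_zero hdiag, hterm, Finset.sum_smul]
  refine ⟨fun i => β i • (w i : ℍ), by simpa only [hnorm] using hβ.2, ?_⟩
  change q = starForm _ _
  rw [starForm_diagonal_add, hform, ← hq, ← hu]
  simp only [hnorm, add_sub_cancel]

theorem exists_norm_sub_le_offDiagForm_of_mem_qnr (hN : ∀ i, N i i = 0)
    (hq : q ∈ qnr (Matrix.diagonal (fun i => (d i : ℍ)) + N)) :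
    ∃ β ∈ nonnegUnitSphere ι, ‖q - (sqWeightedMean d β : ℍ)‖ ≤ offDiagForm N β := by
  obtain ⟨x, hx, rfl⟩ := hq
  refine ⟨fun i => ‖x i‖, ⟨fun i => norm_nonneg _, hx⟩, ?_⟩
  change ‖starForm _ x - _‖ ≤ _
  rw [starForm_diagonal_add, add_sub_cancel_left, offDiagForm_eq_sum_of_diag_eq_zero hN]
  exact norm_starForm_le_sum N x

theorem mem_qnr_diagonal_add_iff (hN : ∀ i j, N i j ≠ 0 → N j i = 0)
    (hforest : (SimpleGraph.fromRel fun i j => N i j ≠ 0).IsAcyclic) :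
    q ∈ qnr (Matrix.diagonal (fun i => (d i : ℍ)) + N) ↔
      ∃ β ∈ nonnegUnitSphere ι, ‖q - (sqWeightedMean d β : ℍ)‖ ≤ offDiagForm N β := by
  refine ⟨exists_norm_sub_le_offDiagForm_of_mem_qnr fun i => by_contra fun h => h (hN i i h), ?_⟩
  rintro ⟨β, hβ, hq⟩
  obtain ⟨b, hb, hqb⟩ := exists_norm_sub_eq_offDiagForm N d hβ hq
  exact mem_qnr_of_norm_sub_eq_offDiagForm hN hforest hb hqb

end NumericalRange

theorem qnr_diag_plus_tree_eq_union_disks_general {ι : Type*} [Fintype ι] [DecidableEq ι]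
    (N : Matrix ι ι ℍ) (d : ι → ℝ)
    (hN : ∀ i j, N i j ≠ 0 → N j i = 0)
    (hforest : (SimpleGraph.fromRel fun i j => N i j ≠ 0).IsAcyclic)
    (dmin dmax : ℝ)
    (hmin : IsLeast (Set.range d) dmin) (hmax : IsGreatest (Set.range d) dmax)
    (r : ℝ → ℝ)
    (hr : ∀ c ∈ Set.Icc dmin dmax,
      IsGreatest {t | ∃ β : ι → ℝ, (∀ i, 0 ≤ β i) ∧ (∑ i, β i ^ 2) = 1 ∧
        (∑ i, d i * β i ^ 2) = c ∧
        t = ∑ i, ∑ j ∈ Finset.univ.filter (fun j => j ≠ i), β i * β j * ‖N i j‖} (r c)) :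
    qnr (Matrix.diagonal (fun i => (d i : ℍ)) + N) =
      ⋃ c ∈ Set.Icc dmin dmax, Metric.closedBall (c : ℍ) (r c) := by
  ext q
  simp only [mem_qnr_diagonal_add_iff hN hforest, Set.mem_iUnion, exists_prop,
    mem_closedBall_iff_norm]
  constructor
  · rintro ⟨β, hβ, hq⟩
    have hc : sqWeightedMean d β ∈ Set.Icc dmin dmax :=
      sqWeightedMean_mem_Icc (fun i => ⟨hmin.2 ⟨i, rfl⟩, hmax.2 ⟨i, rfl⟩⟩) hβ
    exact ⟨_, hc, hq.trans ((hr _ hc).2 ⟨β, hβ.1, hβ.2, rfl, rfl⟩)⟩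
  · rintro ⟨c, hc, hq⟩
    obtain ⟨β, hβ_nonneg, hβ_sum, rfl, hβ_form⟩ := (hr c hc).1
    exact ⟨β, ⟨hβ_nonneg, hβ_sum⟩, hq.trans hβ_form.le⟩

/-- If `A = D + N` with `D` a real diagonal matrix and `N` a strictly upper
triangular tree matrix, then `W(A) = ⋃_{d ∈ [d̲, d̄]} 𝔻_ℍ(d, r(d))`, where
`r(d) = max{∑_{i≠j} βᵢβⱼ|aᵢⱼ| : β ∈ S⁺_{ℝⁿ}, ∑ᵢ dᵢβᵢ² = d}`. -/
theorem qnr_diag_plus_tree_eq_union_disks {n : ℕ}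
    (N : Matrix (Fin n) (Fin n) (Quaternion ℝ)) (d : Fin n → ℝ)
    (hN : ∀ i j, j ≤ i → N i j = 0)
    (htree : (graphOf N).IsTree)
    (dmin dmax : ℝ)
    (hmin : IsLeast (Set.range d) dmin) (hmax : IsGreatest (Set.range d) dmax)
    (r : ℝ → ℝ)
    (hr : ∀ c ∈ Set.Icc dmin dmax,
      IsGreatest {t | ∃ β : Fin n → ℝ, (∀ i, 0 ≤ β i) ∧ (∑ i, β i ^ 2) = 1 ∧
        (∑ i, d i * β i ^ 2) = c ∧
        t = ∑ i, ∑ j ∈ Finset.univ.filter (fun j => j ≠ i), β i * β j * ‖N i j‖} (r c)) :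
    qnr (Matrix.diagonal (fun i => ((d i : ℝ) : Quaternion ℝ)) + N) =
      ⋃ c ∈ Set.Icc dmin dmax, Metric.closedBall ((c : ℝ) : Quaternion ℝ) (r c) :=
  qnr_diag_plus_tree_eq_union_disks_general N d
    (fun i j hij => hN j i (not_le.mp fun hji => hij (hN i j hji)).le) htree.isAcyclic
    dmin dmax hmin hmax r hr
end

section
/- Let A = D + N ∈ Mₙ(ℍ), where D is a diagonal matrix with real entries and N is strictly upper triangular (N_{ij} = 0 for i ≥ j) and cycle-free. Then W(A) is a convex subset of ℍ (regarded as a 4-dimensional real vector space). -/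
/-!
Write `p i = ‖x i‖ ^ 2`, a point of the standard simplex. Then `x⋆(D + N)x` lies within
`R p = ∑ i j, √(p i) √(p j) ‖N i j‖` of the real number `∑ i, p i d i`. Since the graph of `N` is a
forest, the phases of the `x i` can be chosen edge by edge so that all the terms `x i⋆ N i j x j`
point in one prescribed direction; hence the whole sphere of radius `R p` is attained. As `R`
vanishes at the vertices of the simplex, the intermediate value theorem fills in the balls, so
`W(A)` is the union of the closed balls of radius `R p` about `∑ i, p i d i`. The centre is linear
in `p` and `R` is concave, so this union is convex.
-/

open scoped Quaternion

section Forest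

variable {V α : Type*} {G : SimpleGraph V}

/-- The composite of the edge maps `e u v : α → α` along a walk: it carries a label of the first
vertex to a label of the last one. -/
def walkTransport (e : V → V → α → α) : ∀ {u v : V}, G.Walk u v → α → α
  | _, _, .nil => id
  | u, _, .cons (v := v) _ p => walkTransport e p ∘ e u v

theorem walkTransport_concat (e : V → V → α → α) {u v w : V} (p : G.Walk u v) (h : G.Adj v w)
    (a : α) : walkTransport e (p.concat h) a = e v w (walkTransport e p a) := by
  induction p generalizing a with
  | nil => rfl
  | cons _ _ ih => exact ih h _

variable [Nonempty α] {R : V → V → α → α → Prop}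

theorem exists_labelling_of_reachable (hG : G.IsAcyclic)
    (hsymm : ∀ {i j a b}, R i j a b → R j i b a)
    (hext : ∀ {i j}, G.Adj i j → ∀ a, ∃ b, R i j a b) (r : V) :
    ∃ f : V → α, ∀ {i j}, G.Reachable r i → G.Adj i j → R i j (f i) (f j) := by
  obtain ⟨a₀⟩ := ‹Nonempty α›
  have hedge : ∀ i j a, ∃ b, G.Adj i j → R i j a b := fun i j a => by
    by_cases h : G.Adj i j
    · exact (hext h a).imp fun _ hb _ => hb
    · exact ⟨a, fun h' => absurd h' h⟩
  choose e he using hedge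
  have hpath : ∀ v, ∃ b, ∀ p : G.Walk r v, p.IsPath → b = walkTransport e p a₀ := fun v => by
    by_cases h : ∃ p : G.Walk r v, p.IsPath
    · obtain ⟨p, hp⟩ := h
      refine ⟨walkTransport e p a₀, fun q hq => ?_⟩
      rw [Subtype.mk.inj ((hG.subsingleton_path r v).elim ⟨p, hp⟩ ⟨q, hq⟩)]
    · exact ⟨a₀, fun p hp => absurd ⟨p, hp⟩ h⟩
  choose f hf using hpath
  have hstep : ∀ {i j} {p : G.Walk r i} {q : G.Walk r j}, p.IsPath → q.IsPath → G.Adj i j →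
      i ∈ q.support → R i j (f i) (f j) := fun {i j p q} hp hq hij hi => by
    rw [hf j q hq, hG.path_concat hp hq hij hi, walkTransport_concat, ← hf i p hp]
    exact he i j _ hij
  refine ⟨f, fun {i j} hri hij => ?_⟩
  obtain ⟨p, hp⟩ := hri.exists_isPath
  obtain ⟨q, hq⟩ := (hri.trans hij.reachable).exists_isPath
  by_cases hi : i ∈ q.support
  · exact hstep hp hq hij hi
  · have hj : j ∈ p.support := hG.mem_support_of_ne_mem_support_of_adj_of_isPath hp hq hij hi
    exact hsymm (hstep hq hp hij.symm hj)

theorem exists_labelling_of_isAcyclic (hG : G.IsAcyclic)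
    (hsymm : ∀ {i j a b}, R i j a b → R j i b a)
    (hext : ∀ {i j}, G.Adj i j → ∀ a, ∃ b, R i j a b) :
    ∃ f : V → α, ∀ {i j}, G.Adj i j → R i j (f i) (f j) := by
  choose f hf using exists_labelling_of_reachable hG hsymm hext
  let root (v : V) : V := (G.connectedComponentMk v).out
  refine ⟨fun v => f (root v) v, fun {i j} hij => ?_⟩
  have hroot : root i = root j :=
    congrArg Quot.out (SimpleGraph.ConnectedComponent.sound hij.reachable)
  have hreach : G.Reachable (root i) i := SimpleGraph.ConnectedComponent.exact (Quot.out_eq _)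
  simpa only [← hroot] using hf (root i) hreach hij

end Forest

section Convexity

variable {E F : Type*} [AddCommGroup E] [Module ℝ E] [SeminormedAddCommGroup F] [NormedSpace ℝ F]

theorem concaveOn_finsetSum {κ : Type*} {s : Set E} (hs : Convex ℝ s) (t : Finset κ)
    {f : κ → E → ℝ} (hf : ∀ k ∈ t, ConcaveOn ℝ s (f k)) :
    ConcaveOn ℝ s fun x => ∑ k ∈ t, f k x := by
  rw [← Finset.sum_fn]
  exact Finset.sum_induction f (ConcaveOn ℝ s) (fun _ _ => ConcaveOn.add) (concaveOn_const 0 hs) hf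

theorem concaveOn_sqrt_mul_sqrt :
    ConcaveOn ℝ (Set.Ici 0) fun x : ℝ × ℝ => √x.1 * √x.2 := by
  refine ⟨convex_Ici 0, fun x hx y hy a b ha hb _ => ?_⟩
  have hsqrt : ∀ {c s t : ℝ}, 0 ≤ c → √(c * s) * √(c * t) = c * (√s * √t) := fun {c s t} hc => by
    rw [Real.sqrt_mul hc, Real.sqrt_mul hc, mul_mul_mul_comm, Real.mul_self_sqrt hc]
  have cauchySchwarz := Real.sum_sqrt_mul_sqrt_le (Finset.univ : Finset (Fin 2))
    (f := ![a * x.1, b * y.1]) (g := ![a * x.2, b * y.2])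
    (Fin.forall_fin_two.2 ⟨mul_nonneg ha hx.1, mul_nonneg hb hy.1⟩)
    (Fin.forall_fin_two.2 ⟨mul_nonneg ha hx.2, mul_nonneg hb hy.2⟩)
  simpa only [Prod.fst_add, Prod.snd_add, Prod.smul_fst, Prod.smul_snd, smul_eq_mul,
    Fin.sum_univ_two, Matrix.cons_val_zero, Matrix.cons_val_one, hsqrt ha, hsqrt hb]
    using cauchySchwarz

theorem convex_iUnion_closedBall {s : Set E} (c : E →ₗ[ℝ] F) {r : E → ℝ} (hr : ConcaveOn ℝ s r) :
    Convex ℝ (⋃ p ∈ s, Metric.closedBall (c p) (r p)) := by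
  simp only [Convex, StarConvex, Set.mem_iUnion₂, mem_closedBall_iff_norm]
  rintro x ⟨p, hp, hx⟩ y ⟨p', hp', hy⟩ a b ha hb hab
  refine ⟨a • p + b • p', hr.1 hp hp' ha hb hab, ?_⟩
  calc ‖a • x + b • y - c (a • p + b • p')‖
      = ‖a • (x - c p) + b • (y - c p')‖ := by
        rw [map_add, map_smul, map_smul]; congr 1; module
    _ ≤ a * ‖x - c p‖ + b * ‖y - c p'‖ := convexOn_univ_norm.2 trivial trivial ha hb hab
    _ ≤ a * r p + b * r p' := by gcongr
    _ ≤ r (a • p + b • p') := hr.2 hp hp' ha hb hab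

end Convexity

theorem iUnion_closedBall_eq_iUnion_sphere {X M : Type*} [TopologicalSpace X]
    [PseudoMetricSpace M] {s : Set X} (hs : IsPreconnected s) {c : X → M} {r : X → ℝ}
    (hc : ContinuousOn c s) (hr : ContinuousOn r s) (h₀ : ∃ p ∈ s, r p ≤ 0) :
    ⋃ p ∈ s, Metric.closedBall (c p) (r p) = ⋃ p ∈ s, Metric.sphere (c p) (r p) := by
  refine (Set.iUnion₂_subset fun p hp q hq => ?_).antisymm
    (Set.iUnion₂_mono fun _ _ => Metric.sphere_subset_closedBall)
  obtain ⟨p₀, hp₀, hr₀⟩ := h₀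
  obtain ⟨p', hp', heq⟩ := hs.intermediate_value₂ (f := fun p => dist q (c p)) hp hp₀
    (by fun_prop) hr hq (hr₀.trans dist_nonneg)
  exact Set.mem_iUnion₂.2 ⟨p', hp', heq⟩

section CouplingRadius

variable {ι E : Type*} [Fintype ι] [SeminormedAddCommGroup E]

/-- The largest size of `∑ i j, xᵢ⋆ Nᵢⱼ xⱼ` that the triangle inequality allows when
`‖xᵢ‖ ^ 2 = p i`. -/
noncomputable def couplingRadius (N : Matrix ι ι E) (p : ι → ℝ) : ℝ :=
  ∑ i, ∑ j, ‖N i j‖ * (√(p i) * √(p j))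

theorem couplingRadius_single [DecidableEq ι] (N : Matrix ι ι E) (i : ι) :
    couplingRadius N (Pi.single i 1) = ‖N i i‖ := by
  have hsqrt : ∀ j, √((Pi.single i 1 : ι → ℝ) j) = if j = i then 1 else 0 := fun j => by
    rw [Pi.single_apply]; split_ifs <;> simp
  simp [couplingRadius, hsqrt]

theorem continuous_couplingRadius (N : Matrix ι ι E) : Continuous (couplingRadius N) := by
  unfold couplingRadius
  fun_prop

theorem concaveOn_couplingRadius (N : Matrix ι ι E) :
    ConcaveOn ℝ (stdSimplex ℝ ι) (couplingRadius N) := by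
  have hs := convex_stdSimplex ℝ ι
  refine concaveOn_finsetSum hs _ fun i _ => concaveOn_finsetSum hs _ fun j _ => ?_
  refine ConcaveOn.smul (norm_nonneg (N i j)) ?_
  refine (concaveOn_sqrt_mul_sqrt.comp_linearMap
    ((LinearMap.proj (R := ℝ) i).prod (LinearMap.proj j))).subset (fun p hp => ?_) hs
  exact ⟨hp.1 i, hp.1 j⟩

theorem norm_sum_star_mul_mul_le {A : Type*} [NonUnitalSeminormedRing A] [StarAddMonoid A]
    [NormedStarGroup A] (N : Matrix ι ι A) (x : ι → A) :
    ‖∑ i, ∑ j, star (x i) * N i j * x j‖ ≤ couplingRadius N fun i => ‖x i‖ ^ 2 := by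
  refine norm_sum_le_of_le _ fun i _ => norm_sum_le_of_le _ fun j _ => ?_
  calc ‖star (x i) * N i j * x j‖ ≤ ‖star (x i)‖ * ‖N i j‖ * ‖x j‖ := norm_mul₃_le
    _ = ‖N i j‖ * (√(‖x i‖ ^ 2) * √(‖x j‖ ^ 2)) := by
      rw [norm_star, Real.sqrt_sq (norm_nonneg _), Real.sqrt_sq (norm_nonneg _)]; ring

end CouplingRadius

section Phases

theorem exists_norm_eq_one_norm_smul_eq {E : Type*} [NormedAddCommGroup E] [NormedSpace ℝ E]
    [Nontrivial E] (v : E) : ∃ w : E, ‖w‖ = 1 ∧ ‖v‖ • w = v := by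
  rcases eq_or_ne v 0 with rfl | hv
  · exact (exists_norm_eq E zero_le_one).imp fun w hw => ⟨hw, by simp⟩
  · exact ⟨NormedSpace.normalize v, NormedSpace.norm_normalize hv,
      NormedSpace.norm_smul_normalize v⟩

theorem exists_phase_star_mul_mul (a : ℍ[ℝ]) {u w : ℍ[ℝ]} (hu : ‖u‖ = 1) (hw : ‖w‖ = 1) :
    ∃ v : ℍ[ℝ], ‖v‖ = 1 ∧ star u * a * v = ‖a‖ • w := by
  obtain ⟨ν, hν, ha⟩ := exists_norm_eq_one_norm_smul_eq a
  have hunit : ∀ {z : ℍ[ℝ]}, ‖z‖ = 1 → z * star z = 1 ∧ star z * z = 1 := fun {z} hz => by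
    simp [Quaternion.self_mul_star, Quaternion.star_mul_self,
      Quaternion.normSq_eq_norm_mul_self, hz]
  refine ⟨star ν * u * w, by simp [hu, hν, hw], ?_⟩
  calc star u * a * (star ν * u * w)
      = ‖a‖ • (star u * (ν * star ν) * u * w) := by
        conv_lhs => rw [← ha]
        simp only [mul_smul_comm, smul_mul_assoc, mul_assoc]
    _ = ‖a‖ • w := by rw [(hunit hν).1, mul_one, (hunit hu).2, one_mul]

variable {ι : Type*} {N : Matrix ι ι ℍ[ℝ]}

theorem exists_phases_of_isAcyclic (hN : ∀ i j, N i j = 0 ∨ N j i = 0)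
    (hacyclic : (SimpleGraph.fromRel fun i j => N i j ≠ 0).IsAcyclic) {w : ℍ[ℝ]} (hw : ‖w‖ = 1) :
    ∃ u : ι → ℍ[ℝ], (∀ i, ‖u i‖ = 1) ∧ ∀ i j, star (u i) * N i j * u j = ‖N i j‖ • w := by
  let Aligned (i j : ι) (a b : ℍ[ℝ]) : Prop := star a * N i j * b = ‖N i j‖ • w
  have hext : ∀ i j (a : {z : ℍ[ℝ] // ‖z‖ = 1}), ∃ b : {z : ℍ[ℝ] // ‖z‖ = 1},
      Aligned i j a b ∧ Aligned j i b a := fun i j ⟨a, ha⟩ => by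
    rcases hN i j with h | h
    · obtain ⟨b, hb, hab⟩ := exists_phase_star_mul_mul (star (N j i)) ha (w := star w) (by simpa)
      refine ⟨⟨b, hb⟩, by simp [Aligned, h], ?_⟩
      simpa [Aligned, mul_assoc] using congrArg star hab
    · obtain ⟨b, hb, hab⟩ := exists_phase_star_mul_mul (N i j) ha hw
      exact ⟨⟨b, hb⟩, hab, by simp [Aligned, h]⟩
  have : Nonempty {z : ℍ[ℝ] // ‖z‖ = 1} := ⟨⟨1, norm_one⟩⟩
  obtain ⟨u, hu⟩ := exists_labelling_of_isAcyclic hacyclic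
    (R := fun i j (a b : {z : ℍ[ℝ] // ‖z‖ = 1}) => Aligned i j a b ∧ Aligned j i b a)
    And.symm fun {i j} _ => hext i j
  refine ⟨fun i => u i, fun i => (u i).2, fun i j => ?_⟩
  by_cases h : N i j = 0
  · simp [h]
  · have hij : i ≠ j := by
      rintro rfl
      exact h ((hN i i).elim id id)
    exact (hu ((SimpleGraph.fromRel_adj _ _ _).2 ⟨hij, .inl h⟩)).1

end Phases

section NumericalRange

variable {ι : Type*} [Fintype ι]

/-- The weighted sum `p ↦ ∑ i, p i * d i` of real numbers `d i`, regarded as a quaternion. -/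
noncomputable def weightedSum (d : ι → ℝ) : (ι → ℝ) →ₗ[ℝ] ℍ[ℝ] :=
  Fintype.linearCombination ℝ fun i => (d i : ℍ[ℝ])

variable [DecidableEq ι]

theorem sum_star_mul_diagonal_add_mul (d : ι → ℝ) (N : Matrix ι ι ℍ[ℝ]) (x : ι → ℍ[ℝ]) :
    ∑ i, ∑ j, star (x i) * (Matrix.diagonal (fun i => (d i : ℍ[ℝ])) + N) i j * x j =
      weightedSum d (fun i => ‖x i‖ ^ 2) + ∑ i, ∑ j, star (x i) * N i j * x j := by
  have hdiag : ∀ i, star (x i) * (d i : ℍ[ℝ]) * x i = ‖x i‖ ^ 2 • (d i : ℍ[ℝ]) := fun i => by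
    rw [← Quaternion.coe_commutes, mul_assoc, Quaternion.star_mul_self,
      Quaternion.normSq_eq_norm_mul_self, ← pow_two, Quaternion.coe_commutes,
      Quaternion.coe_mul_eq_smul]
  simp [weightedSum, Fintype.linearCombination_apply, Matrix.diagonal_apply, mul_add, add_mul,
    Finset.sum_add_distrib, hdiag]

theorem qnr_subset_iUnion_closedBall (d : ι → ℝ) (N : Matrix ι ι ℍ[ℝ]) :
    qnr (Matrix.diagonal (fun i => (d i : ℍ[ℝ])) + N) ⊆
      ⋃ p ∈ stdSimplex ℝ ι, Metric.closedBall (weightedSum d p) (couplingRadius N p) := by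
  rintro _ ⟨x, hx, rfl⟩
  refine Set.mem_iUnion₂.2 ⟨fun i => ‖x i‖ ^ 2, ⟨fun i => sq_nonneg _, hx⟩, ?_⟩
  rw [sum_star_mul_diagonal_add_mul, mem_closedBall_iff_norm, add_sub_cancel_left]
  exact norm_sum_star_mul_mul_le N x

variable {N : Matrix ι ι ℍ[ℝ]}

theorem sphere_subset_qnr (hN : ∀ i j, N i j = 0 ∨ N j i = 0)
    (hacyclic : (SimpleGraph.fromRel fun i j => N i j ≠ 0).IsAcyclic) (d : ι → ℝ) {p : ι → ℝ}
    (hp : p ∈ stdSimplex ℝ ι) :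
    Metric.sphere (weightedSum d p) (couplingRadius N p) ⊆
      qnr (Matrix.diagonal (fun i => (d i : ℍ[ℝ])) + N) := by
  intro q hq
  obtain ⟨w, hw, hqw⟩ := exists_norm_eq_one_norm_smul_eq (q - weightedSum d p)
  rw [mem_sphere_iff_norm.1 hq] at hqw
  obtain ⟨u, hu, hNu⟩ := exists_phases_of_isAcyclic hN hacyclic hw
  have hnorm : ∀ i, ‖√(p i) • u i‖ ^ 2 = p i := fun i => by
    rw [norm_smul, hu, mul_one, Real.norm_eq_abs, sq_abs, Real.sq_sqrt (hp.1 i)]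
  have hform : ∑ i, ∑ j, star (√(p i) • u i) * N i j * (√(p j) • u j) =
      couplingRadius N p • w := by
    simp only [couplingRadius, Finset.sum_smul, Quaternion.star_smul, smul_mul_assoc,
      mul_smul_comm, hNu, smul_smul]
    refine Finset.sum_congr rfl fun i _ => Finset.sum_congr rfl fun j _ => ?_
    congr 1
    ring
  refine ⟨fun i => √(p i) • u i, by simp only [hnorm, hp.2], ?_⟩
  rw [sum_star_mul_diagonal_add_mul, hform, hqw]
  simp only [hnorm, add_sub_cancel]

theorem qnr_eq_iUnion_closedBall (hN : ∀ i j, N i j = 0 ∨ N j i = 0)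
    (hacyclic : (SimpleGraph.fromRel fun i j => N i j ≠ 0).IsAcyclic) (d : ι → ℝ) :
    qnr (Matrix.diagonal (fun i => (d i : ℍ[ℝ])) + N) =
      ⋃ p ∈ stdSimplex ℝ ι, Metric.closedBall (weightedSum d p) (couplingRadius N p) := by
  refine (qnr_subset_iUnion_closedBall d N).antisymm ?_
  rcases isEmpty_or_nonempty ι with _ | ⟨⟨i⟩⟩
  · simp [stdSimplex_of_isEmpty_index]
  have hvertex : ∃ p ∈ stdSimplex ℝ ι, couplingRadius N p ≤ 0 :=
    ⟨Pi.single i 1, single_mem_stdSimplex ℝ i, by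
      rw [couplingRadius_single, (hN i i).elim id id, norm_zero]⟩
  rw [iUnion_closedBall_eq_iUnion_sphere (convex_stdSimplex ℝ ι).isPreconnected
    (weightedSum d).continuous_of_finiteDimensional.continuousOn
    (continuous_couplingRadius N).continuousOn hvertex]
  exact Set.iUnion₂_subset fun p hp => sphere_subset_qnr hN hacyclic d hp

theorem qnr_diag_plus_cycle_free_convex_general (N : Matrix ι ι ℍ[ℝ]) (d : ι → ℝ)
    (hN : ∀ i j, N i j = 0 ∨ N j i = 0)
    (hacyclic : (SimpleGraph.fromRel fun i j => N i j ≠ 0).IsAcyclic) :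
    Convex ℝ (qnr (Matrix.diagonal (fun i => (d i : ℍ[ℝ])) + N)) := by
  rw [qnr_eq_iUnion_closedBall hN hacyclic]
  exact convex_iUnion_closedBall (weightedSum d) (concaveOn_couplingRadius N)

end NumericalRange

/-- If `A = D + N` with `D` a real diagonal matrix and `N` strictly upper
triangular and cycle-free, then `W(A)` is convex (in `ℍ` as a real vector space). -/
theorem qnr_diag_plus_cycle_free_convex {n : ℕ}
    (N : Matrix (Fin n) (Fin n) (Quaternion ℝ)) (d : Fin n → ℝ)
    (hN : ∀ i j, j ≤ i → N i j = 0)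
    (hacyclic : (graphOf N).IsAcyclic) :
    Convex ℝ (qnr (Matrix.diagonal (fun i => ((d i : ℝ) : Quaternion ℝ)) + N)) :=
  qnr_diag_plus_cycle_free_convex_general N d
    (fun i j => (le_total j i).imp (hN i j) (hN j i)) hacyclic
end

section
/- Let A ∈ M₃(ℍ) be strictly upper triangular (a_{ij} = 0 for i ≥ j), with entries a₁₂, a₁₃, a₂₃ above the diagonal. Then W(A) is a convex subset of ℍ if and only if a₁₃* a₁₂ a₂₃ is a real quaternion (its imaginary part vanishes). -/
/-!
Conjugation by unit quaternions shows that membership of `q` in `W(A)` depends only on `Re q` and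
`|Im q|`. So if `W(A)` is convex it contains `Re q` whenever it contains `q`, and the maximum of
`Re` on `W(A)` is attained at a real value `x⋆Ax`. Such an `x` is an eigenvector of `A + A⋆` with
real eigenvalue, and eliminating the coordinates of `x` from the eigenvector equations shows that
`a₁₃* a₁₂ a₂₃` is real.

Conversely, if `a₁₃* a₁₂ a₂₃` is real then conjugation by a diagonal unitary matrix makes `A` real.
For real `A` of size three, `A - Aᵀ = u vᵀ - v uᵀ` for some vectors `u`, `v`. If `x` has Gram
matrix `G` over `ℝ`, then `Re x⋆Ax = tr(AG)` and
`|uᵀGv + Im x⋆Ax|² = |∑ uᵢxᵢ|² |∑ vᵢxᵢ|² = (uᵀGu)(vᵀGv)`. Every density matrix `G` is the Gram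
matrix of some `x` because `ℍ` has real dimension at least three. Relaxing the last equality to `≤`
does not change the set of `q = x⋆Ax` that arise, and it turns the condition on `(G, q)` into
membership in a convex cone.
-/

open Matrix Quaternion

theorem coe_re_eq_of_im_eq_zero {q : ℍ[ℝ]} (h : q.im = 0) : (q.re : ℍ[ℝ]) = q := by
  simpa [h] using q.re_add_im

theorem star_mul_self_eq_coe_norm_sq (q : ℍ[ℝ]) : star q * q = ((‖q‖ ^ 2 : ℝ) : ℍ[ℝ]) := by
  rw [star_mul_self, normSq_eq_norm_mul_self, sq]

theorem star_mul_self_of_norm_eq_one {u : ℍ[ℝ]} (hu : ‖u‖ = 1) : star u * u = 1 := by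
  simp [star_mul_self_eq_coe_norm_sq, hu]

theorem mul_star_self_of_norm_eq_one {u : ℍ[ℝ]} (hu : ‖u‖ = 1) : u * star u = 1 := by
  simpa using star_mul_self_of_norm_eq_one (u := star u) (by simpa)

theorem mem_unitary_of_norm_eq_one {u : ℍ[ℝ]} (hu : ‖u‖ = 1) : u ∈ unitary ℍ[ℝ] :=
  ⟨star_mul_self_of_norm_eq_one hu, mul_star_self_of_norm_eq_one hu⟩

theorem norm_coe_add_im_sq (r : ℝ) (q : ℍ[ℝ]) : ‖(r : ℍ[ℝ]) + q.im‖ ^ 2 = r ^ 2 + ‖q.im‖ ^ 2 := by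
  simp only [sq ‖_‖, ← normSq_eq_norm_mul_self, normSq_def', re_add, re_coe, re_im, imI_add,
    imI_coe, imI_im, imJ_add, imJ_coe, imJ_im, imK_add, imK_coe, imK_im]
  ring

theorem re_sum {ι : Type*} (s : Finset ι) (f : ι → ℍ[ℝ]) : (∑ i ∈ s, f i).re = ∑ i ∈ s, (f i).re :=
  map_sum (QuaternionAlgebra.reₗ (R := ℝ) (-1) 0 (-1)) f s

theorem re_star_mul (p q : ℍ[ℝ]) : (star p * q).re = inner ℝ p q := by
  rw [Quaternion.inner_def]
  simp

theorem im_eq_im_of_sub_star_eq {p q : ℍ[ℝ]} (h : p - star p = q - star q) : p.im = q.im := by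
  have hI := congrArg QuaternionAlgebra.imI h
  have hJ := congrArg QuaternionAlgebra.imJ h
  have hK := congrArg QuaternionAlgebra.imK h
  simp only [imI_sub, imJ_sub, imK_sub, imI_star, imJ_star, imK_star] at hI hJ hK
  ext <;> simp <;> linarith

theorem im_star_mul_comm (p q : ℍ[ℝ]) : (star p * q).im = -(star q * p).im := by
  rw [← im_star, star_mul, star_star]

theorem im_star_mul_mul_eq_zero {q : ℍ[ℝ]} (h : q.im = 0) (u : ℍ[ℝ]) :
    (star u * q * u).im = 0 := by
  rw [← coe_re_eq_of_im_eq_zero h, ← coe_commutes, mul_assoc, star_mul_self, ← coe_mul, im_coe]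

theorem exists_eq_norm_smul (q : ℍ[ℝ]) : ∃ u : ℍ[ℝ], ‖u‖ = 1 ∧ q = ‖q‖ • u := by
  rcases eq_or_ne q 0 with rfl | hq
  · exact ⟨1, norm_one, by simp⟩
  · exact ⟨‖q‖⁻¹ • q, by simp [norm_smul, hq], by simp [smul_smul, hq]⟩

theorem im_eq_zero_of_mul_eq_smul {q w : ℍ[ℝ]} {r : ℝ} (hw : w ≠ 0) (h : q * w = r • w) :
    q.im = 0 := by
  rw [← coe_mul_eq_smul] at h
  rw [mul_right_cancel₀ hw h, im_coe]

theorem exists_eq_smul_of_im_star_mul_eq_zero {y z : ℍ[ℝ]} (hz : z ≠ 0)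
    (h : (star z * y).im = 0) : ∃ r : ℝ, y = r • z := by
  refine ⟨(normSq z)⁻¹ * (star z * y).re, ?_⟩
  have hy : normSq z • y = (star z * y).re • z := by
    rw [← coe_mul_eq_smul, ← coe_mul_eq_smul, ← self_mul_star, mul_assoc,
      ← coe_re_eq_of_im_eq_zero h, coe_commutes, re_coe]
  rw [mul_smul, ← hy, inv_smul_smul₀ (normSq_ne_zero.2 hz)]

theorem im_mul_self (q : ℍ[ℝ]) : q.im * q.im = -((‖q.im‖ ^ 2 : ℝ) : ℍ[ℝ]) := by
  rw [← star_mul_self_eq_coe_norm_sq, star_im, neg_mul, neg_neg]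

theorem im_eq_zero_of_forall_commute {q : ℍ[ℝ]} (h : ∀ t, q * t = t * q) : q.im = 0 := by
  simp only [Quaternion.ext_iff, re_mul, imI_mul, imJ_mul, imK_mul] at h
  have hI := h ⟨0, 1, 0, 0⟩
  have hJ := h ⟨0, 0, 1, 0⟩
  ext <;> simp <;> linarith

theorem exists_ne_zero_im_mul_eq_mul_im {p q : ℍ[ℝ]} (h : ‖p.im‖ = ‖q.im‖) :
    ∃ s : ℍ[ℝ], s ≠ 0 ∧ p.im * s = s * q.im := by
  -- Since `p.im ^ 2 = q.im ^ 2 = -‖q.im‖ ^ 2`, every `p.im * t + t * q.im` is a solution `s`.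
  by_contra! hs
  have anticomm (t : ℍ[ℝ]) : p.im * t + t * q.im = 0 := by
    by_contra ht
    refine hs _ ht ?_
    rw [mul_add, add_mul, ← mul_assoc, mul_assoc t, im_mul_self, im_mul_self, h,
      ← coe_neg, coe_commutes, mul_assoc, add_comm]
  have hpq : q.im = -p.im := by simpa [eq_neg_iff_add_eq_zero, add_comm] using anticomm 1
  have hp : p.im.im = 0 := im_eq_zero_of_forall_commute fun t => by
    simpa [hpq, add_neg_eq_zero] using anticomm t
  refine hs 1 one_ne_zero ?_
  rw [im_idem] at hp
  simp [hpq, hp]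

theorem exists_star_mul_mul_eq {p q : ℍ[ℝ]} (hre : p.re = q.re) (him : ‖p.im‖ = ‖q.im‖) :
    ∃ u : ℍ[ℝ], ‖u‖ = 1 ∧ star u * p * u = q := by
  obtain ⟨s, hs, hsim⟩ := exists_ne_zero_im_mul_eq_mul_im him
  obtain ⟨u, hu, hsu⟩ := exists_eq_norm_smul s
  have hmul : p * u = u * q := by
    have : p * s = s * q := by
      rw [← re_add_im p, ← re_add_im q, add_mul, mul_add, hsim, hre, coe_commutes]
    rw [hsu, mul_smul_comm, smul_mul_assoc] at this
    exact smul_right_injective _ (norm_ne_zero_iff.2 hs) this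
  exact ⟨u, hu, by rw [mul_assoc, hmul, ← mul_assoc, star_mul_self_of_norm_eq_one hu, one_mul]⟩

theorem star_mulVec_dotProduct {m n R : Type*} [Fintype m] [Fintype n] [NonUnitalSemiring R]
    [StarRing R] (U : Matrix m n R) (x : n → R) (y : m → R) :
    star (U *ᵥ x) ⬝ᵥ y = star x ⬝ᵥ Uᴴ *ᵥ y := by
  rw [star_mulVec, dotProduct_mulVec]

theorem diagonal_mem_unitary {n R : Type*} [Fintype n] [DecidableEq n] [Semiring R] [StarRing R]
    {u : n → R} (hu : ∀ i, u i ∈ unitary R) : diagonal u ∈ unitary (Matrix n n R) := by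
  simp [Unitary.mem_iff, star_eq_conjTranspose, diagonal_conjTranspose,
    Unitary.star_mul_self_of_mem (hu _), Unitary.mul_star_self_of_mem (hu _)]

section NumericalRange

variable {ι : Type*} [Fintype ι] {A : Matrix ι ι ℍ[ℝ]}

theorem mem_qnr_iff {q : ℍ[ℝ]} :
    q ∈ qnr A ↔ ∃ x : ι → ℍ[ℝ], ∑ i, ‖x i‖ ^ 2 = 1 ∧ star x ⬝ᵥ A *ᵥ x = q := by
  simp only [qnr, Set.mem_ofPred_eq, dotProduct, mulVec, Pi.star_apply, Finset.mul_sum, mul_assoc,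
    eq_comm]

theorem star_mul_mul_mem_qnr {q u : ℍ[ℝ]} (hu : ‖u‖ = 1) (hq : q ∈ qnr A) :
    star u * q * u ∈ qnr A := by
  obtain ⟨x, hx, rfl⟩ := hq
  refine ⟨fun i => x i * u, by simpa [hu] using hx, ?_⟩
  simp only [Finset.mul_sum, Finset.sum_mul, star_mul, mul_assoc]

theorem mem_qnr_of_re_eq_of_norm_im_eq {p q : ℍ[ℝ]} (hp : p ∈ qnr A) (hre : p.re = q.re)
    (him : ‖p.im‖ = ‖q.im‖) : q ∈ qnr A := by
  obtain ⟨u, hu, rfl⟩ := exists_star_mul_mul_eq hre him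
  exact star_mul_mul_mem_qnr hu hp

theorem coe_re_mem_qnr_of_convex (hA : Convex ℝ (qnr A)) {q : ℍ[ℝ]} (hq : q ∈ qnr A) :
    (q.re : ℍ[ℝ]) ∈ qnr A := by
  have hstar : star q ∈ qnr A := mem_qnr_of_re_eq_of_norm_im_eq hq (by simp) (by simp)
  convert hA hq hstar (a := 1 / 2) (b := 1 / 2) (by norm_num) (by norm_num) (by norm_num) using 1
  rw [← smul_add, self_add_star', smul_coe]
  congr 1
  ring

theorem star_dotProduct_self (x : ι → ℍ[ℝ]) :
    star x ⬝ᵥ x = ((∑ i, ‖x i‖ ^ 2 : ℝ) : ℍ[ℝ]) := by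
  simp only [dotProduct, Pi.star_apply, star_mul_self_eq_coe_norm_sq]
  exact (map_sum (algebraMap ℝ ℍ[ℝ]) _ _).symm

variable [DecidableEq ι]

theorem qnr_conj_subset {U : Matrix ι ι ℍ[ℝ]} (hU : U ∈ unitary (Matrix ι ι ℍ[ℝ])) :
    qnr (star U * A * U) ⊆ qnr A := by
  intro q hq
  obtain ⟨x, hx, rfl⟩ := mem_qnr_iff.1 hq
  refine mem_qnr_iff.2 ⟨U *ᵥ x, ?_, ?_⟩
  · rw [← coe_inj, ← star_dotProduct_self, star_mulVec_dotProduct, ← star_eq_conjTranspose,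
      mulVec_mulVec, Unitary.star_mul_self_of_mem hU, one_mulVec, star_dotProduct_self, hx]
  · rw [star_mulVec_dotProduct, ← star_eq_conjTranspose, mulVec_mulVec, mulVec_mulVec, mul_assoc]

theorem qnr_conj {U : Matrix ι ι ℍ[ℝ]} (hU : U ∈ unitary (Matrix ι ι ℍ[ℝ])) :
    qnr (star U * A * U) = qnr A := by
  refine (qnr_conj_subset hU).antisymm ?_
  have h := qnr_conj_subset (A := star U * A * U) (Unitary.star_mem hU)
  rwa [star_star, mul_assoc, mul_assoc _ U, Unitary.mul_star_self_of_mem hU, mul_one, ← mul_assoc,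
    Unitary.mul_star_self_of_mem hU, one_mul] at h

end NumericalRange

section Rayleigh

variable {ι : Type*} [Fintype ι]

/-- Left multiplication by a quaternionic matrix on column vectors, as an operator on the real
Hilbert space `ℍ^ι`. The scalars are `ℝ` because left multiplication by `A` does not commute with
the left action of `ℍ`. -/
noncomputable def mulVecCLM (A : Matrix ι ι ℍ[ℝ]) :
    PiLp 2 (fun _ : ι => ℍ[ℝ]) →L[ℝ] PiLp 2 (fun _ : ι => ℍ[ℝ]) :=
  LinearMap.toContinuousLinearMap
    { toFun := fun x => WithLp.toLp 2 (A *ᵥ x.ofLp)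
      map_add' := fun x y => by simp [mulVec_add]
      map_smul' := fun r x => by simp [mulVec_smul] }

theorem ofLp_mulVecCLM (A : Matrix ι ι ℍ[ℝ]) (x : PiLp 2 (fun _ : ι => ℍ[ℝ])) :
    (mulVecCLM A x).ofLp = A *ᵥ x.ofLp :=
  rfl

theorem real_inner_eq_re_star_dotProduct (x y : PiLp 2 (fun _ : ι => ℍ[ℝ])) :
    inner ℝ x y = (star x.ofLp ⬝ᵥ y.ofLp).re := by
  simp only [PiLp.inner_apply, dotProduct, Pi.star_apply, re_sum, re_star_mul]

theorem isSelfAdjoint_mulVecCLM {H : Matrix ι ι ℍ[ℝ]} (hH : H.IsHermitian) :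
    IsSelfAdjoint (mulVecCLM H) := by
  refine LinearMap.IsSymmetric.isSelfAdjoint fun x y => ?_
  simp only [ContinuousLinearMap.coe_coe, real_inner_eq_re_star_dotProduct, ofLp_mulVecCLM,
    star_mulVec_dotProduct, hH.eq]

theorem re_star_dotProduct_conjTranspose_mulVec (A : Matrix ι ι ℍ[ℝ]) (x : ι → ℍ[ℝ]) :
    (star x ⬝ᵥ Aᴴ *ᵥ x).re = (star x ⬝ᵥ A *ᵥ x).re := by
  rw [← star_mulVec_dotProduct, ← re_star, ← star_dotProduct_star]
  simp

theorem mem_sphere_iff_sum_norm_sq {x : PiLp 2 (fun _ : ι => ℍ[ℝ])} :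
    x ∈ Metric.sphere 0 1 ↔ ∑ i, ‖x i‖ ^ 2 = 1 := by
  rw [mem_sphere_zero_iff_norm, ← PiLp.norm_sq_eq_of_L2,
    pow_eq_one_iff_of_nonneg (norm_nonneg x) two_ne_zero]

theorem isCompact_qnr (A : Matrix ι ι ℍ[ℝ]) : IsCompact (qnr A) := by
  have hqnr : qnr A = (fun x : PiLp 2 (fun _ : ι => ℍ[ℝ]) => star x.ofLp ⬝ᵥ A *ᵥ x.ofLp) ''
      Metric.sphere 0 1 := by
    ext q
    simp only [Set.mem_image, mem_sphere_iff_sum_norm_sq, mem_qnr_iff]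
    exact (WithLp.equiv 2 _).symm.exists_congr_left
  rw [hqnr]
  have : ProperSpace (PiLp 2 (fun _ : ι => ℍ[ℝ])) := FiniteDimensional.proper_real _
  refine (isCompact_sphere _ _).image ?_
  simp only [dotProduct, mulVec]
  fun_prop

theorem qnr_nonempty [Nonempty ι] (A : Matrix ι ι ℍ[ℝ]) : (qnr A).Nonempty := by
  classical
  inhabit ι
  refine ⟨_, Pi.single default 1, ?_, rfl⟩
  simp [Pi.single_apply, apply_ite]

theorem add_conjTranspose_mulVec_of_re_isMax {A : Matrix ι ι ℍ[ℝ]} {x : ι → ℍ[ℝ]}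
    (hx : ∑ i, ‖x i‖ ^ 2 = 1) (hmax : ∀ q ∈ qnr A, q.re ≤ (star x ⬝ᵥ A *ᵥ x).re) :
    ∃ μ : ℝ, (A + Aᴴ) *ᵥ x = μ • x := by
  set T := mulVecCLM (A + Aᴴ)
  have hT : IsSelfAdjoint T := isSelfAdjoint_mulVecCLM (isHermitian_add_transpose_self A)
  have reApply (y : PiLp 2 (fun _ : ι => ℍ[ℝ])) :
      T.reApplyInnerSelf y = 2 * (star y.ofLp ⬝ᵥ A *ᵥ y.ofLp).re := by
    rw [T.reApplyInnerSelf_apply, RCLike.re_to_real, real_inner_comm,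
      real_inner_eq_re_star_dotProduct, ofLp_mulVecCLM, add_mulVec, dotProduct_add, re_add,
      re_star_dotProduct_conjTranspose_mulVec, two_mul]
  have hx' : ‖WithLp.toLp 2 x‖ = 1 := mem_sphere_zero_iff_norm.1 (mem_sphere_iff_sum_norm_sq.2 hx)
  have hextr : IsMaxOn T.reApplyInnerSelf (Metric.sphere 0 ‖WithLp.toLp 2 x‖)
      (WithLp.toLp 2 x) := by
    intro y hy
    rw [hx', mem_sphere_iff_sum_norm_sq] at hy
    simp only [Set.mem_ofPred_eq, reApply]
    linarith [hmax _ (mem_qnr_iff.2 ⟨y.ofLp, hy, rfl⟩)]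
  exact ⟨_, congrArg WithLp.ofLp (hT.eq_smul_self_of_isLocalExtrOn (.inr hextr.localize))⟩

theorem exists_eigenvector_of_convex_qnr [Nonempty ι] {A : Matrix ι ι ℍ[ℝ]}
    (hA : Convex ℝ (qnr A)) :
    ∃ x : ι → ℍ[ℝ], x ≠ 0 ∧ (star x ⬝ᵥ A *ᵥ x).im = 0 ∧ ∃ μ : ℝ, (A + Aᴴ) *ᵥ x = μ • x := by
  obtain ⟨q, hq, hmax⟩ := (isCompact_qnr A).exists_isMaxOn (qnr_nonempty A)
    continuous_re.continuousOn
  obtain ⟨x, hx, hxq⟩ := mem_qnr_iff.1 (coe_re_mem_qnr_of_convex hA hq)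
  refine ⟨x, ?_, by rw [hxq, im_coe], add_conjTranspose_mulVec_of_re_isMax hx ?_⟩
  · rintro rfl
    simp at hx
  · rw [hxq, re_coe]
    exact hmax

end Rayleigh

section StrictlyUpperTriangular

variable {A : Matrix (Fin 3) (Fin 3) ℍ[ℝ]}

theorem star_dotProduct_mulVec_of_strictlyUpper (hA : ∀ i j, j ≤ i → A i j = 0)
    (x : Fin 3 → ℍ[ℝ]) :
    star x ⬝ᵥ A *ᵥ x =
      star (x 0) * (A 0 1 * x 1 + A 0 2 * x 2) + star (x 1) * (A 1 2 * x 2) := by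
  simp [dotProduct, mulVec, Fin.sum_univ_three, hA 0 0, hA 1 0, hA 1 1, hA 2 0, hA 2 1, hA 2 2]

theorem add_conjTranspose_mulVec_of_strictlyUpper (hA : ∀ i j, j ≤ i → A i j = 0)
    (x : Fin 3 → ℍ[ℝ]) :
    (A + Aᴴ) *ᵥ x =
      ![A 0 1 * x 1 + A 0 2 * x 2, star (A 0 1) * x 0 + A 1 2 * x 2,
        star (A 0 2) * x 0 + star (A 1 2) * x 1] := by
  ext1 i
  fin_cases i <;> simp [dotProduct, mulVec, Fin.sum_univ_three, hA 0 0, hA 1 0, hA 1 1, hA 2 0,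
    hA 2 1, hA 2 2]

theorem im_eq_zero_of_eigenvector_of_ne_zero {a b c x y z : ℍ[ℝ]} {μ : ℝ} (hz : z ≠ 0)
    (h₀ : a * y + b * z = μ • x) (h₁ : star a * x + c * z = μ • y)
    (h₂ : star b * x + star c * y = μ • z)
    (him : (star x * (a * y + b * z) + star y * (c * z)).im = 0) :
    (star b * a * c).im = 0 := by
  have hyz : (star y * (c * z)).im = 0 := by
    simpa [h₀, mul_smul_comm, star_mul_self] using him
  have hzy : (star z * (star c * y)).im = 0 := by
    rw [← mul_assoc, ← star_mul, im_star_mul_comm, hyz, neg_zero]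
  have hzx : (star z * (star b * x)).im = 0 := by
    rw [eq_sub_of_add_eq h₂, mul_sub, im_sub, hzy, mul_smul_comm, star_mul_self, im_smul, im_coe,
      smul_zero, sub_zero]
  obtain ⟨r, hr⟩ := exists_eq_smul_of_im_star_mul_eq_zero hz hzx
  refine im_eq_zero_of_mul_eq_smul (r := μ * (μ * r - ‖b‖ ^ 2) - ‖a‖ ^ 2 * r) hz ?_
  calc star b * a * c * z = star b * (a * (μ • y - star a * x)) := by
        rw [← eq_sub_of_add_eq' h₁]; simp only [mul_assoc]
    _ = μ • (star b * (a * y)) - ‖a‖ ^ 2 • (star b * x) := by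
        rw [mul_sub, ← mul_assoc a, self_mul_star, normSq_eq_norm_mul_self, ← sq, coe_mul_eq_smul]
        simp only [mul_sub, mul_smul_comm]
    _ = μ • (μ • (star b * x) - ‖b‖ ^ 2 • z) - ‖a‖ ^ 2 • (star b * x) := by
        rw [eq_sub_of_add_eq h₀, mul_sub, ← mul_assoc (star b) b, star_mul_self_eq_coe_norm_sq,
          coe_mul_eq_smul, mul_smul_comm]
    _ = (μ * (μ * r - ‖b‖ ^ 2) - ‖a‖ ^ 2 * r) • z := by
        rw [hr]; module

theorem im_eq_zero_of_eigenvector {a b c x y z : ℍ[ℝ]} {μ : ℝ} (hxyz : ![x, y, z] ≠ 0)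
    (h₀ : a * y + b * z = μ • x) (h₁ : star a * x + c * z = μ • y)
    (h₂ : star b * x + star c * y = μ • z)
    (him : (star x * (a * y + b * z) + star y * (c * z)).im = 0) :
    (star b * a * c).im = 0 := by
  rcases eq_or_ne a 0 with rfl | ha
  · simp
  rcases eq_or_ne c 0 with rfl | hc
  · simp
  rcases ne_or_eq z 0 with hz | rfl
  · exact im_eq_zero_of_eigenvector_of_ne_zero hz h₀ h₁ h₂ him
  simp only [mul_zero, add_zero, smul_zero] at h₀ h₁ h₂
  have hy : y ≠ 0 := by
    rintro rfl
    have hx : x = 0 := by simpa [ha] using h₁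
    simp [hx] at hxyz
  refine im_eq_zero_of_mul_eq_smul (w := star c * y) (r := -(‖c‖ ^ 2 * μ)) (by simp [hc, hy]) ?_
  calc star b * a * c * (star c * y) = ‖c‖ ^ 2 • (star b * (a * y)) := by
        rw [mul_assoc _ c, ← mul_assoc c, self_mul_star, normSq_eq_norm_mul_self, ← sq,
          coe_mul_eq_smul, mul_smul_comm, mul_assoc]
    _ = ‖c‖ ^ 2 • μ • -(star c * y) := by
        rw [h₀, mul_smul_comm, eq_neg_of_add_eq_zero_left h₂]
    _ = -(‖c‖ ^ 2 * μ) • (star c * y) := by module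

theorem im_star_mul_mul_eq_zero_of_convex_qnr (hA : ∀ i j, j ≤ i → A i j = 0)
    (hconv : Convex ℝ (qnr A)) : (star (A 0 2) * A 0 1 * A 1 2).im = 0 := by
  obtain ⟨x, hx, him, μ, hμ⟩ := exists_eigenvector_of_convex_qnr hconv
  rw [star_dotProduct_mulVec_of_strictlyUpper hA] at him
  rw [add_conjTranspose_mulVec_of_strictlyUpper hA] at hμ
  exact im_eq_zero_of_eigenvector (x := x 0) (y := x 1) (z := x 2)
    ((FinVec.etaExpand_eq x).trans_ne hx) (congrFun hμ 0) (congrFun hμ 1) (congrFun hμ 2) him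

end StrictlyUpperTriangular

section DensityMatrices

variable {ι : Type*} [Fintype ι]

section Gram

variable {E : Type*} [NormedAddCommGroup E] [InnerProductSpace ℝ E]

theorem trace_gram (x : ι → E) : (gram ℝ x).trace = ∑ i, ‖x i‖ ^ 2 := by
  simp [trace, gram_apply]

theorem norm_sum_smul_sq (u : ι → ℝ) (x : ι → E) :
    ‖∑ i, u i • x i‖ ^ 2 = u ⬝ᵥ gram ℝ x *ᵥ u := by
  rw [← real_inner_self_eq_norm_sq, ← star_dotProduct_gram_mulVec, star_trivial]

end Gram

open scoped ComplexOrder in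
theorem exists_gram_eq_of_posSemidef {𝕜 E : Type*} [RCLike 𝕜] [NormedAddCommGroup E]
    [InnerProductSpace 𝕜 E] [FiniteDimensional 𝕜 E] {G : Matrix ι ι 𝕜} (hG : G.PosSemidef)
    (hcard : Fintype.card ι ≤ Module.finrank 𝕜 E) : ∃ x : ι → E, gram 𝕜 x = G := by
  classical
  obtain ⟨C, rfl⟩ : ∃ C : Matrix ι ι 𝕜, G = star C * C := by
    open scoped MatrixOrder Matrix.Norms.L2Operator in
    exact CStarAlgebra.nonneg_iff_eq_star_mul_self.1 hG.nonneg
  obtain ⟨f⟩ : Nonempty (ι ↪ Fin (Module.finrank 𝕜 E)) :=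
    Function.Embedding.nonempty_of_card_le (by simpa)
  have hb := (stdOrthonormalBasis 𝕜 E).orthonormal.comp f f.injective
  refine ⟨fun j => ∑ i, C i j • stdOrthonormalBasis 𝕜 E (f i), ?_⟩
  ext j k
  rw [gram_apply]
  exact hb.inner_sum _ _ _

/-- The real density matrices: the convex hull of the rank one projections `vecMulVec p p`, and the
Gram matrices of the vectors `x` with `∑ i, ‖x i‖ ^ 2 = 1`. -/
def densityMatrices (ι : Type*) [Fintype ι] : Set (Matrix ι ι ℝ) :=
  {G | G.PosSemidef ∧ G.trace = 1}

theorem convex_densityMatrices : Convex ℝ (densityMatrices ι) := by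
  rintro G ⟨hG, htr⟩ G' ⟨hG', htr'⟩ s t hs ht hst
  exact ⟨(hG.smul hs).add (hG'.smul ht), by simpa [htr, htr'] using hst⟩

theorem vecMulVec_mem_densityMatrices {p : ι → ℝ} (hp : p ⬝ᵥ p = 1) :
    vecMulVec p p ∈ densityMatrices ι :=
  ⟨by simpa using posSemidef_vecMulVec_self_star p, by rw [trace_vecMulVec, hp]⟩

theorem convex_image_dotProduct_mulVec_self [Nontrivial ι] (B : Matrix ι ι ℝ) :
    Convex ℝ ((fun p => p ⬝ᵥ B *ᵥ p) '' {p : ι → ℝ | p ⬝ᵥ p = 1}) := by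
  have hsphere : {p : ι → ℝ | p ⬝ᵥ p = 1} =
      WithLp.ofLp '' Metric.sphere (0 : EuclideanSpace ℝ ι) 1 := by
    rw [EuclideanSpace.sphere_zero_eq _ zero_le_one]
    ext p
    constructor
    · exact fun hp => ⟨WithLp.toLp 2 p, by simpa [dotProduct, sq] using hp, rfl⟩
    · rintro ⟨p, hp, rfl⟩
      simpa [dotProduct, sq] using hp
  have hrank : 1 < Module.rank ℝ (EuclideanSpace ℝ ι) := by
    rw [← Module.finrank_eq_rank, finrank_euclideanSpace]
    exact_mod_cast Fintype.one_lt_card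
  rw [Real.convex_iff_isPreconnected, hsphere, Set.image_image]
  refine (isPreconnected_sphere hrank _ _).image _ (Continuous.continuousOn ?_)
  simp only [dotProduct, mulVec]
  fun_prop

theorem exists_dotProduct_mulVec_self_eq_trace [Nontrivial ι] (B : Matrix ι ι ℝ)
    {G : Matrix ι ι ℝ} (hG : G ∈ densityMatrices ι) :
    ∃ p : ι → ℝ, p ⬝ᵥ p = 1 ∧ p ⬝ᵥ B *ᵥ p = (B * G).trace := by
  classical
  obtain ⟨hG, htr⟩ := hG
  let U : Matrix ι ι ℝ := hG.isHermitian.eigenvectorUnitary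
  let ev := hG.isHermitian.eigenvalues
  have hU : Uᵀ * U = 1 := Unitary.star_mul_self_of_mem hG.isHermitian.eigenvectorUnitary.2
  have hspec : G = U * diagonal ev * Uᵀ := hG.isHermitian.spectral_theorem
  have htrace : (B * G).trace = ∑ k, ev k • (U.col k ⬝ᵥ B *ᵥ U.col k) := by
    calc (B * G).trace = (Uᵀ * (B * U) * diagonal ev).trace := by
          rw [hspec, ← Matrix.mul_assoc, trace_mul_comm]
          simp only [Matrix.mul_assoc]
      _ = ∑ k, ev k • (U.col k ⬝ᵥ B *ᵥ U.col k) := by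
          simp only [trace, diag_apply, mul_diagonal, smul_eq_mul, mul_comm (ev _)]
          rfl
  rw [htrace]
  refine (convex_image_dotProduct_mulVec_self B).sum_mem (fun k _ => hG.eigenvalues_nonneg k)
    (by simpa [htr] using hG.isHermitian.trace_eq_sum_eigenvalues.symm) fun k _ =>
      ⟨U.col k, ?_, rfl⟩
  exact (congrFun (congrFun hU k) k).trans (one_apply_eq k)

end DensityMatrices

/-- The rotated Lorentz (second order) cone over a normed space `E`, with the two scalar
coordinates first. -/
def rotatedLorentzCone (E : Type*) [SeminormedAddCommGroup E] : Set (ℝ × ℝ × E) :=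
  {p | 0 ≤ p.1 ∧ 0 ≤ p.2.1 ∧ ‖p.2.2‖ ^ 2 ≤ p.1 * p.2.1}

theorem convex_rotatedLorentzCone {E : Type*} [SeminormedAddCommGroup E] [NormedSpace ℝ E] :
    Convex ℝ (rotatedLorentzCone E) := by
  rintro ⟨a, b, x⟩ ⟨ha, hb, hx⟩ ⟨c, d, y⟩ ⟨hc, hd, hy⟩ s t hs ht -
  dsimp only at ha hb hx hc hd hy
  have hcross : ‖x‖ * ‖y‖ * 2 ≤ a * d + c * b := by
    refine abs_le_of_sq_le_sq' ?_ (by positivity) |>.2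
    calc (‖x‖ * ‖y‖ * 2) ^ 2 = 4 * (‖x‖ ^ 2 * ‖y‖ ^ 2) := by ring
      _ ≤ 4 * ((a * b) * (c * d)) := by gcongr
      _ ≤ (a * d + c * b) ^ 2 := by nlinarith [sq_nonneg (a * d - c * b)]
  refine ⟨by dsimp; positivity, by dsimp; positivity, ?_⟩
  calc ‖s • x + t • y‖ ^ 2 ≤ (s * ‖x‖ + t * ‖y‖) ^ 2 := by
        gcongr
        simpa [norm_smul, abs_of_nonneg, hs, ht] using norm_add_le (s • x) (t • y)
    _ = s ^ 2 * ‖x‖ ^ 2 + s * t * (‖x‖ * ‖y‖ * 2) + t ^ 2 * ‖y‖ ^ 2 := by ring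
    _ ≤ s ^ 2 * (a * b) + s * t * (a * d + c * b) + t ^ 2 * (c * d) := by gcongr
    _ = (s * a + t * c) * (s * b + t * d) := by ring

theorem exists_eq_vecMulVec_sub_vecMulVec {F : Type*} [Field F] [NeZero (2 : F)]
    {K : Matrix (Fin 3) (Fin 3) F} (hK : Kᵀ = -K) :
    ∃ u v : Fin 3 → F, K = vecMulVec u v - vecMulVec v u := by
  have hskew i j : K j i = -K i j := congrFun (congrFun hK i) j
  have hdiag i : K i i = 0 := by
    have := hskew i i
    rw [eq_neg_iff_add_eq_zero, ← two_mul] at this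
    exact (mul_eq_zero.1 this).resolve_left two_ne_zero
  obtain ⟨u, v, h01, h02, h12⟩ : ∃ u v : Fin 3 → F, K 0 1 = u 0 * v 1 - v 0 * u 1 ∧
      K 0 2 = u 0 * v 2 - v 0 * u 2 ∧ K 1 2 = u 1 * v 2 - v 1 * u 2 := by
    by_cases h : K 0 1 = 0
    · exact ⟨![K 0 2, K 1 2, 0], ![0, 0, 1], by simp [h]⟩
    · exact ⟨![1, 0, -(K 1 2 / K 0 1)], ![0, K 0 1, K 0 2], by simp [mul_div_cancel₀ _ h]⟩
  refine ⟨u, v, ?_⟩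
  ext i j
  fin_cases i <;> fin_cases j <;>
    simp [vecMulVec_apply, hdiag, h01, h02, h12, hskew 0 1, hskew 0 2, hskew 1 2] <;>
    ring

section RealMatrix

variable {ι : Type*} [Fintype ι]

theorem star_dotProduct_map_coe_mulVec (B : Matrix ι ι ℝ) (x : ι → ℍ[ℝ]) :
    star x ⬝ᵥ B.map (↑) *ᵥ x = ∑ i, ∑ j, B i j • (star (x i) * x j) := by
  simp [dotProduct, mulVec, Finset.mul_sum, Quaternion.coe_mul_eq_smul]

theorem re_star_dotProduct_map_coe_mulVec (B : Matrix ι ι ℝ) (x : ι → ℍ[ℝ]) :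
    (star x ⬝ᵥ B.map (↑) *ᵥ x).re = (B * gram ℝ x).trace := by
  simp only [star_dotProduct_map_coe_mulVec, trace, diag_apply, mul_apply, gram_apply,
    real_inner_comm, ← re_star_mul, re_sum, re_smul, smul_eq_mul]

theorem star_star_dotProduct_map_coe_mulVec (B : Matrix ι ι ℝ) (x : ι → ℍ[ℝ]) :
    star (star x ⬝ᵥ B.map (↑) *ᵥ x) = star x ⬝ᵥ Bᵀ.map (↑) *ᵥ x := by
  simp only [star_dotProduct_map_coe_mulVec, star_sum, Quaternion.star_smul, star_mul, star_star,
    transpose_apply]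
  exact Finset.sum_comm

theorem star_sum_smul_mul_sum_smul (u v : ι → ℝ) (x : ι → ℍ[ℝ]) :
    star (∑ i, u i • x i) * ∑ i, v i • x i = star x ⬝ᵥ (vecMulVec u v).map (↑) *ᵥ x := by
  simp [star_dotProduct_map_coe_mulVec, star_sum, Finset.sum_mul_sum, vecMulVec_apply, smul_smul,
    mul_comm (v _)]

theorem coe_add_im_star_dotProduct_map_coe_mulVec {B : Matrix ι ι ℝ} {u v : ι → ℝ}
    (hB : B - Bᵀ = vecMulVec u v - vecMulVec v u) (x : ι → ℍ[ℝ]) :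
    (↑(u ⬝ᵥ gram ℝ x *ᵥ v) : ℍ[ℝ]) + (star x ⬝ᵥ B.map (↑) *ᵥ x).im =
      star (∑ i, u i • x i) * ∑ i, v i • x i := by
  have hre : u ⬝ᵥ gram ℝ x *ᵥ v = (star (∑ i, u i • x i) * ∑ i, v i • x i).re := by
    rw [re_star_mul, ← star_dotProduct_gram_mulVec, star_trivial]
  have him : (star x ⬝ᵥ B.map (↑) *ᵥ x).im = (star (∑ i, u i • x i) * ∑ i, v i • x i).im := by
    apply im_eq_im_of_sub_star_eq
    rw [star_mul, star_star, star_sum_smul_mul_sum_smul, star_sum_smul_mul_sum_smul,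
      star_star_dotProduct_map_coe_mulVec]
    simp only [star_dotProduct_map_coe_mulVec, ← Finset.sum_sub_distrib, ← sub_smul]
    exact Finset.sum_congr rfl fun i _ => Finset.sum_congr rfl fun j _ =>
      congrArg (· • _) (congrFun (congrFun hB i) j)
  rw [hre, him, re_add_im]

theorem norm_coe_add_im_star_dotProduct_map_coe_mulVec_sq {B : Matrix ι ι ℝ} {u v : ι → ℝ}
    (hB : B - Bᵀ = vecMulVec u v - vecMulVec v u) (x : ι → ℍ[ℝ]) :
    ‖(↑(u ⬝ᵥ gram ℝ x *ᵥ v) : ℍ[ℝ]) + (star x ⬝ᵥ B.map (↑) *ᵥ x).im‖ ^ 2 =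
      (u ⬝ᵥ gram ℝ x *ᵥ u) * (v ⬝ᵥ gram ℝ x *ᵥ v) := by
  rw [coe_add_im_star_dotProduct_map_coe_mulVec hB, norm_mul, norm_star, mul_pow,
    norm_sum_smul_sq, norm_sum_smul_sq]

-- The Gram determinant of `u` and `v` vanishes on rank one matrices, and one of them lies on the
-- hyperplane through `G`, so the determinant takes every value in between on the joining segment.
theorem exists_mem_densityMatrices_gram_det_eq [Nontrivial ι] (B : Matrix ι ι ℝ) (u v : ι → ℝ)
    {G : Matrix ι ι ℝ} (hG : G ∈ densityMatrices ι) {r : ℝ} (hr : 0 ≤ r)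
    (hrG : r ≤ (u ⬝ᵥ G *ᵥ u) * (v ⬝ᵥ G *ᵥ v) - (u ⬝ᵥ G *ᵥ v) ^ 2) :
    ∃ G' ∈ densityMatrices ι, (B * G').trace = (B * G).trace ∧
      (u ⬝ᵥ G' *ᵥ u) * (v ⬝ᵥ G' *ᵥ v) - (u ⬝ᵥ G' *ᵥ v) ^ 2 = r := by
  obtain ⟨p, hp, hBp⟩ := exists_dotProduct_mulVec_self_eq_trace B hG
  have hconvex : Convex ℝ (densityMatrices ι ∩ {G' | (B * G').trace = (B * G).trace}) :=
    convex_densityMatrices.inter <| convex_hyperplane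
      ((traceLinearMap ι ℝ ℝ).comp (LinearMap.mulLeft ℝ B)).isLinear _
  have hpB : (B * vecMulVec p p).trace = (B * G).trace := by
    rw [mul_vecMulVec, trace_vecMulVec, dotProduct_comm, hBp]
  have hpr : (u ⬝ᵥ vecMulVec p p *ᵥ u) * (v ⬝ᵥ vecMulVec p p *ᵥ v) -
      (u ⬝ᵥ vecMulVec p p *ᵥ v) ^ 2 ≤ r := by
    refine le_of_eq_of_le ?_ hr
    simp only [vecMulVec_mulVec, dotProduct_smul, op_smul_eq_smul, smul_eq_mul, dotProduct_comm _ p]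
    ring
  have hcont : Continuous fun G' : Matrix ι ι ℝ =>
      (u ⬝ᵥ G' *ᵥ u) * (v ⬝ᵥ G' *ᵥ v) - (u ⬝ᵥ G' *ᵥ v) ^ 2 := by
    fun_prop
  obtain ⟨G', ⟨hG', hBG'⟩, hG'r⟩ := hconvex.isPreconnected.intermediate_value
    ⟨vecMulVec_mem_densityMatrices hp, hpB⟩ ⟨hG, rfl⟩ hcont.continuousOn ⟨hpr, hrG⟩
  exact ⟨G', hG', hBG', hG'r⟩

theorem mem_qnr_map_coe_iff [Nontrivial ι] (hι : Fintype.card ι ≤ 4) {B : Matrix ι ι ℝ}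
    {u v : ι → ℝ} (hB : B - Bᵀ = vecMulVec u v - vecMulVec v u) {q : ℍ[ℝ]} :
    q ∈ qnr (B.map (↑)) ↔ ∃ G ∈ densityMatrices ι, (B * G).trace = q.re ∧
      (u ⬝ᵥ G *ᵥ u, v ⬝ᵥ G *ᵥ v, (↑(u ⬝ᵥ G *ᵥ v) : ℍ[ℝ]) + q.im) ∈ rotatedLorentzCone ℍ[ℝ] := by
  constructor
  · intro hq
    obtain ⟨x, hx, rfl⟩ := mem_qnr_iff.1 hq
    refine ⟨gram ℝ x, ⟨posSemidef_gram ℝ x, by rw [trace_gram, hx]⟩,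
      (re_star_dotProduct_map_coe_mulVec B x).symm,
      (sq_nonneg _).trans_eq (norm_sum_smul_sq u x), (sq_nonneg _).trans_eq (norm_sum_smul_sq v x),
      (norm_coe_add_im_star_dotProduct_map_coe_mulVec_sq hB x).le⟩
  · rintro ⟨G, hG, hre, -, -, hle⟩
    rw [norm_coe_add_im_sq] at hle
    obtain ⟨G', ⟨hG', htr'⟩, hre', hG'q⟩ := exists_mem_densityMatrices_gram_det_eq B u v hG
      (sq_nonneg ‖q.im‖) (le_sub_iff_add_le'.2 hle)
    obtain ⟨x, rfl⟩ := exists_gram_eq_of_posSemidef (E := ℍ[ℝ]) hG'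
      (by rwa [Quaternion.finrank_eq_four])
    have hx := norm_coe_add_im_star_dotProduct_map_coe_mulVec_sq hB x
    rw [norm_coe_add_im_sq, ← eq_sub_iff_add_eq', hG'q] at hx
    refine mem_qnr_of_re_eq_of_norm_im_eq (mem_qnr_iff.2 ⟨x, by rw [← trace_gram, htr'], rfl⟩) ?_
      ((sq_eq_sq₀ (norm_nonneg _) (norm_nonneg _)).1 hx)
    rw [re_star_dotProduct_map_coe_mulVec, hre', hre]

theorem convex_qnr_map_coe_of_sub_transpose_eq [Nontrivial ι] (hι : Fintype.card ι ≤ 4)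
    {B : Matrix ι ι ℝ} {u v : ι → ℝ} (hB : B - Bᵀ = vecMulVec u v - vecMulVec v u) :
    Convex ℝ (qnr (B.map (↑))) := by
  intro q hq q' hq' s t hs ht hst
  rw [mem_qnr_map_coe_iff hι hB] at hq hq' ⊢
  obtain ⟨G, hG, hre, hcone⟩ := hq
  obtain ⟨G', hG', hre', hcone'⟩ := hq'
  refine ⟨s • G + t • G', convex_densityMatrices hG hG' hs ht hst, by simp [mul_add, hre, hre'], ?_⟩
  convert convex_rotatedLorentzCone hcone hcone' hs ht hst using 1
  simp only [add_mulVec, smul_mulVec, dotProduct_add, dotProduct_smul, smul_eq_mul, coe_add,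
    coe_mul, coe_mul_eq_smul, im_add, im_smul, Prod.smul_mk, smul_add, Prod.mk_add_mk,
    Prod.mk.injEq, true_and]
  abel

end RealMatrix

theorem convex_qnr_of_im_eq_zero {A : Matrix (Fin 3) (Fin 3) ℍ[ℝ]} (hA : ∀ i j, (A i j).im = 0) :
    Convex ℝ (qnr A) := by
  obtain ⟨B, rfl⟩ : ∃ B : Matrix (Fin 3) (Fin 3) ℝ, B.map (↑) = A :=
    ⟨A.map QuaternionAlgebra.re, Matrix.ext fun i j => coe_re_eq_of_im_eq_zero (hA i j)⟩
  obtain ⟨u, v, hB⟩ := exists_eq_vecMulVec_sub_vecMulVec (K := B - Bᵀ) (by simp)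
  exact convex_qnr_map_coe_of_sub_transpose_eq (by simp) hB

theorem exists_im_star_mul_mul_eq_zero {a b c : ℍ[ℝ]} (h : (star b * a * c).im = 0) :
    ∃ u v w : ℍ[ℝ], ‖u‖ = 1 ∧ ‖v‖ = 1 ∧ ‖w‖ = 1 ∧ (star u * a * v).im = 0 ∧
      (star u * b * w).im = 0 ∧ (star v * c * w).im = 0 := by
  obtain ⟨a', ha', ha⟩ := exists_eq_norm_smul a
  obtain ⟨b', hb', hb⟩ := exists_eq_norm_smul b
  obtain ⟨c', hc', hc⟩ := exists_eq_norm_smul c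
  by_cases ha0 : a = 0
  · refine ⟨b', c', 1, hb', hc', norm_one, by simp [ha0], ?_, ?_⟩
    · rw [hb]
      simp [star_mul_self_of_norm_eq_one hb']
    · rw [hc]
      simp [star_mul_self_of_norm_eq_one hc']
  by_cases hc0 : c = 0
  · refine ⟨1, star a', star b', norm_one, by simpa, by simpa, ?_, ?_, by simp [hc0]⟩
    · rw [ha]
      simp [mul_star_self_of_norm_eq_one ha']
    · rw [hb]
      simp [mul_star_self_of_norm_eq_one hb']
  have hreal : (star b * a' * c').im = 0 := by
    rw [ha, hc, mul_smul_comm, mul_smul_comm, smul_mul_assoc, smul_smul, im_smul] at h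
    exact (smul_eq_zero.1 h).resolve_left (by simp [ha0, hc0])
  refine ⟨a', 1, star c', ha', norm_one, by simpa, ?_, ?_, ?_⟩
  · rw [ha]
    simp [star_mul_self_of_norm_eq_one ha']
  · have hconj := im_star_mul_mul_eq_zero hreal (star c')
    rw [star_star, mul_assoc, mul_assoc _ c', mul_star_self_of_norm_eq_one hc', mul_one] at hconj
    have hstar : star a' * b * star c' = star (c' * (star b * a')) := by simp
    rw [hstar, im_star, hconj, neg_zero]
  · rw [hc]
    simp [mul_star_self_of_norm_eq_one hc']

theorem exists_mem_unitary_im_eq_zero {A : Matrix (Fin 3) (Fin 3) ℍ[ℝ]}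
    (hA : ∀ i j, j ≤ i → A i j = 0) (h : (star (A 0 2) * A 0 1 * A 1 2).im = 0) :
    ∃ U ∈ unitary (Matrix (Fin 3) (Fin 3) ℍ[ℝ]), ∀ i j, ((star U * A * U) i j).im = 0 := by
  obtain ⟨u, v, w, hu, hv, hw, h01, h02, h12⟩ := exists_im_star_mul_mul_eq_zero h
  refine ⟨diagonal ![u, v, w], diagonal_mem_unitary ?_, ?_⟩
  · simp [Fin.forall_fin_succ, mem_unitary_of_norm_eq_one hu, mem_unitary_of_norm_eq_one hv,
      mem_unitary_of_norm_eq_one hw]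
  have hentry i j : (star (diagonal ![u, v, w]) * A * diagonal ![u, v, w]) i j =
      star (![u, v, w] i) * A i j * ![u, v, w] j := by
    simp [star_eq_conjTranspose]
  intro i j
  rw [hentry]
  rcases le_or_gt j i with hji | hij
  · simp [hA i j hji]
  · fin_cases i <;> fin_cases j <;> first | exact h01 | exact h02 | exact h12 | simp at hij

/-- For a strictly upper triangular `A ∈ M₃(ℍ)`, the numerical range `W(A)` is
convex iff `a₁₃* a₁₂ a₂₃` is real. -/
theorem qnr_3x3_convex_iff (A : Matrix (Fin 3) (Fin 3) (Quaternion ℝ))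
    (hupper : ∀ i j, j ≤ i → A i j = 0) :
    Convex ℝ (qnr A) ↔ (star (A 0 2) * A 0 1 * A 1 2).im = 0 := by
  refine ⟨im_star_mul_mul_eq_zero_of_convex_qnr hupper, fun h => ?_⟩
  obtain ⟨U, hU, hreal⟩ := exists_mem_unitary_im_eq_zero hupper h
  rw [← qnr_conj hU]
  exact convex_qnr_of_im_eq_zero hreal
end
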